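/- Λ' coincides with the Nomizu map of the dual data: for all A, B ∈ 𝔪', Λ'(A)B = (1/2)proj_{𝔪'}([A,B]) + U'(A,B), where U' : 𝔪' × 𝔪' → 𝔪' is the symmetric bilinear map determined by 2g'(U'(A,B),C) = g'(proj_{𝔪'}([C,A]),B) + g'(A, proj_{𝔪'}([C,B])) for all C ∈ 𝔪'. -/

import Mathlib

noncomputable section

/- Context: *extended symmetric data* consists of a finite-dimensional real
semisimple Lie algebra `𝔤` with a `ℤ₂`-grading `𝔤 = 𝔤₀ ⊕ 𝔤₁`, a decomposition
`𝔤₀ = 𝔥 ⊕ 𝔨` into commuting Lie subalgebras, and nonzero reals `λ₀, λ₁` such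
that `g := λ₀ κ|𝔨 ⊥ λ₁ κ|𝔤₁` is positive definite on `𝔪 := 𝔨 ⊕ 𝔤₁` (`κ` the
Killing form).  `proj_𝔪` is the projection `𝔤 = 𝔥 ⊕ 𝔪 → 𝔪` along `𝔥`, `U` is
the symmetric bilinear map determined by
`2g(U(X,Y),Z) = g(proj_𝔪[Z,X],Y) + g(X,proj_𝔪[Z,Y])`, and the Nomizu map is
`Λ(X)Y = ½ proj_𝔪[X,Y] + U(X,Y)`. -/

/-- Extended symmetric data on a real Lie algebra `L` (semisimplicity and finite
dimensionality are imposed as typeclass assumptions in the theorems). -/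
structure ExtSymData (L : Type*) [LieRing L] [LieAlgebra ℝ L] where
  /-- the subalgebra `𝔥` -/
  H : Submodule ℝ L
  /-- the subalgebra `𝔨` -/
  K : Submodule ℝ L
  /-- the odd part `𝔤₁` of the grading -/
  G1 : Submodule ℝ L
  lam0 : ℝ
  lam1 : ℝ
  lam0_ne : lam0 ≠ 0
  lam1_ne : lam1 ≠ 0
  /-- `𝔥 ⊕ 𝔨` is a direct sum -/
  hHK_inf : H ⊓ K = ⊥
  /-- `𝔤₀ ⊕ 𝔤₁` is a direct sum -/
  hG0_inf : (H ⊔ K) ⊓ G1 = ⊥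
  /-- `𝔤 = 𝔥 ⊕ 𝔨 ⊕ 𝔤₁` -/
  h_top : H ⊔ K ⊔ G1 = ⊤
  /-- `𝔥` is a Lie subalgebra -/
  hH_sub : ∀ a ∈ H, ∀ b ∈ H, ⁅a, b⁆ ∈ H
  /-- `𝔨` is a Lie subalgebra -/
  hK_sub : ∀ a ∈ K, ∀ b ∈ K, ⁅a, b⁆ ∈ K
  /-- `[𝔥, 𝔨] = 0` -/
  hHK_comm : ∀ a ∈ H, ∀ b ∈ K, ⁅a, b⁆ = (0 : L)
  /-- `[𝔤₀, 𝔤₁] ⊆ 𝔤₁` -/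
  hG0G1 : ∀ a ∈ H ⊔ K, ∀ b ∈ G1, ⁅a, b⁆ ∈ G1
  /-- `[𝔤₁, 𝔤₁] ⊆ 𝔤₀` -/
  hG1G1 : ∀ a ∈ G1, ∀ b ∈ G1, ⁅a, b⁆ ∈ H ⊔ K
  /-- the metric `g` -/
  gform : L →ₗ[ℝ] L →ₗ[ℝ] ℝ
  gform_K : ∀ x ∈ K, ∀ x' ∈ K, gform x x' = lam0 * killingForm ℝ L x x'
  gform_G1 : ∀ y ∈ G1, ∀ y' ∈ G1, gform y y' = lam1 * killingForm ℝ L y y'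
  gform_KG1 : ∀ x ∈ K, ∀ y ∈ G1, gform x y = 0
  gform_G1K : ∀ x ∈ K, ∀ y ∈ G1, gform y x = 0
  /-- `g` is positive definite on `𝔪 = 𝔨 ⊕ 𝔤₁` -/
  gform_posdef : ∀ v ∈ K ⊔ G1, v ≠ 0 → 0 < gform v v
  /-- the projection `proj_𝔪 : 𝔤 = 𝔥 ⊕ 𝔪 → 𝔪` along `𝔥` -/
  projm : L →ₗ[ℝ] L
  projm_H : ∀ h ∈ H, projm h = 0
  projm_m : ∀ m ∈ K ⊔ G1, projm m = m
  /-- the symmetric bilinear map `U` -/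
  Ubil : L →ₗ[ℝ] L →ₗ[ℝ] L
  Ubil_symm : ∀ X Y : L, Ubil X Y = Ubil Y X
  Ubil_mem : ∀ X ∈ K ⊔ G1, ∀ Y ∈ K ⊔ G1, Ubil X Y ∈ K ⊔ G1
  Ubil_def : ∀ X ∈ K ⊔ G1, ∀ Y ∈ K ⊔ G1, ∀ Z ∈ K ⊔ G1,
    2 * gform (Ubil X Y) Z = gform (projm ⁅Z, X⁆) Y + gform X (projm ⁅Z, Y⁆)

variable {L : Type*} [LieRing L] [LieAlgebra ℝ L]

/-- The Nomizu map `Λ(X)Y = ½ proj_𝔪 ⁅X,Y⁆ + U(X,Y)` of the Levi-Civita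
connection. -/
def nomizu (D : ExtSymData L) (X Y : L) : L :=
  (2⁻¹ : ℝ) • D.projm ⁅X, Y⁆ + D.Ubil X Y

open scoped TensorProduct

/-- The embedding `v ↦ 1 ⊗ v` of `𝔤` into `𝔤^ℂ = ℂ ⊗[ℝ] 𝔤`. -/
def iota1 {L : Type*} [LieRing L] [LieAlgebra ℝ L] : L →ₗ[ℝ] ℂ ⊗[ℝ] L :=
  TensorProduct.mk ℝ ℂ L 1

/-- The map `v ↦ i ⊗ v` of `𝔤` into `𝔤^ℂ = ℂ ⊗[ℝ] 𝔤`. -/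
def iotaI {L : Type*} [LieRing L] [LieAlgebra ℝ L] : L →ₗ[ℝ] ℂ ⊗[ℝ] L :=
  TensorProduct.mk ℝ ℂ L Complex.I

/-- The value `Λ'(x + iy)(x' + iy')` of the dual Nomizu map, written out in
components:
`Λ'(x+iy)(x'+iy') = 1 ⊗ (Λ(x)x' - Λ(y)y') + i ⊗ (2[x,y'] - Λ(x)y' - Λ(y)x')`,
which is exactly the piecewise definition
`Λ'(x)x' = Λ(x)x'`, `Λ'(x)(iy') = i(2[x,y'] - Λ(x)y')`,
`Λ'(iy)x' = -i Λ(y)x'`, `Λ'(iy)(iy') = -Λ(y)y'`. -/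
def nomizuDual (D : ExtSymData L) (x y x' y' : L) : ℂ ⊗[ℝ] L :=
  iota1 (nomizu D x x' - nomizu D y y')
    + iotaI ((2 : ℝ) • ⁅x, y'⁆ - nomizu D x y' - nomizu D y x')

/-- The real subspace `𝔪' = 𝔨 ⊕ i𝔤₁` of `𝔤^ℂ`. -/
def mDual (D : ExtSymData L) : Submodule ℝ (ℂ ⊗[ℝ] L) :=
  D.K.map iota1 ⊔ D.G1.map iotaI

/-! Compare the identities determining `U` and `U'`. Since `ad 𝔨` acts on `𝔪` by skew-symmetric
maps, testing them against `𝔨` gives zero, so `U` takes values in `𝔤₁` and `U'` in `i𝔤₁`. When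
`U(x, y')` is tested against `d ∈ 𝔤₁` and `U'(x, iy')` against `i • d`, the terms
`g([d, x], y') = g([x, y'], d)` agree, whereas `g(x, proj_𝔪[d, y'])` changes sign because
`i² = -1`. Adding the two identities cancels the latter and gives
`U'(x + iy, x' + iy') = i([x, y'] + [x', y] - U(x, y') - U(x', y))`; the claim follows by comparing
components. -/

lemma lie_iota1_add_iotaI (x y x' y' : L) :
    ⁅iota1 x + iotaI y, iota1 x' + iotaI y'⁆ =
      iota1 (⁅x, x'⁆ - ⁅y, y'⁆) + iotaI (⁅x, y'⁆ + ⁅y, x'⁆) := by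
  simp only [iota1, iotaI, TensorProduct.mk_apply, add_lie, lie_add,
    LieAlgebra.ExtendScalars.bracket_tmul, one_mul, mul_one, Complex.I_mul_I,
    TensorProduct.neg_tmul, TensorProduct.tmul_sub, TensorProduct.tmul_add]
  abel

namespace ExtSymData

variable (D : ExtSymData L) {x x' y y' c d v w : L}

lemma lie_K_G1_mem (hx : x ∈ D.K) (hy : y ∈ D.G1) : ⁅x, y⁆ ∈ D.G1 :=
  D.hG0G1 x (Submodule.mem_sup_right hx) y hy

lemma lie_G1_K_mem (hy : y ∈ D.G1) (hx : x ∈ D.K) : ⁅y, x⁆ ∈ D.G1 := by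
  rw [← lie_skew]
  exact D.G1.neg_mem (D.lie_K_G1_mem hx hy)

lemma lie_K_sup_mem (hx : x ∈ D.K) (hv : v ∈ D.K ⊔ D.G1) : ⁅x, v⁆ ∈ D.K ⊔ D.G1 := by
  obtain ⟨a, ha, b, hb, rfl⟩ := Submodule.mem_sup.1 hv
  rw [lie_add]
  exact Submodule.add_mem_sup (D.hK_sub x hx a ha) (D.lie_K_G1_mem hx hb)

lemma projm_of_mem_K (hx : x ∈ D.K) : D.projm x = x :=
  D.projm_m x (Submodule.mem_sup_left hx)

lemma projm_of_mem_G1 (hy : y ∈ D.G1) : D.projm y = y :=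
  D.projm_m y (Submodule.mem_sup_right hy)

lemma sub_projm_mem_H (hv : v ∈ D.H ⊔ D.K) : v - D.projm v ∈ D.H := by
  obtain ⟨h, hh, k, hk, rfl⟩ := Submodule.mem_sup.1 hv
  simpa [D.projm_H h hh, D.projm_of_mem_K hk] using hh

lemma projm_mem_K (hv : v ∈ D.H ⊔ D.K) : D.projm v ∈ D.K := by
  obtain ⟨h, hh, k, hk, rfl⟩ := Submodule.mem_sup.1 hv
  simpa [D.projm_H h hh, D.projm_of_mem_K hk] using hk

lemma lie_sub_projm_mem_K (hx : x ∈ D.K) (hy : y ∈ D.G1) (hx' : x' ∈ D.K) (hy' : y' ∈ D.G1) :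
    ⁅x, x'⁆ - D.projm ⁅y, y'⁆ ∈ D.K :=
  D.K.sub_mem (D.hK_sub x hx x' hx') (D.projm_mem_K (D.hG1G1 y hy y' hy'))

lemma lie_add_lie_mem_G1 (hx : x ∈ D.K) (hy : y ∈ D.G1) (hx' : x' ∈ D.K) (hy' : y' ∈ D.G1) :
    ⁅x, y'⁆ + ⁅y, x'⁆ ∈ D.G1 :=
  D.G1.add_mem (D.lie_K_G1_mem hx hy') (D.lie_G1_K_mem hy hx')

lemma gform_add_add (hx : x ∈ D.K) (hy : y ∈ D.G1) (hx' : x' ∈ D.K) (hy' : y' ∈ D.G1) :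
    D.gform (x + y) (x' + y') = D.gform x x' + D.gform y y' := by
  simp [D.gform_KG1 x hx y' hy', D.gform_G1K x' hx' y hy]

lemma gform_comm (hv : v ∈ D.K ⊔ D.G1) (hw : w ∈ D.K ⊔ D.G1) : D.gform v w = D.gform w v := by
  obtain ⟨a, ha, b, hb, rfl⟩ := Submodule.mem_sup.1 hv
  obtain ⟨a', ha', b', hb', rfl⟩ := Submodule.mem_sup.1 hw
  rw [D.gform_add_add ha hb ha' hb', D.gform_add_add ha' hb' ha hb,
    D.gform_K a ha a' ha', D.gform_K a' ha' a ha, D.gform_G1 b hb b' hb', D.gform_G1 b' hb' b hb,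
    LieModule.traceForm_comm ℝ L L a, LieModule.traceForm_comm ℝ L L b]

lemma gform_lie_left (hc : c ∈ D.K) (hv : v ∈ D.K ⊔ D.G1) (hw : w ∈ D.K ⊔ D.G1) :
    D.gform ⁅c, v⁆ w = -D.gform v ⁅c, w⁆ := by
  obtain ⟨a, ha, b, hb, rfl⟩ := Submodule.mem_sup.1 hv
  obtain ⟨a', ha', b', hb', rfl⟩ := Submodule.mem_sup.1 hw
  have hca := D.hK_sub c hc a ha
  have hca' := D.hK_sub c hc a' ha'
  have hcb := D.lie_K_G1_mem hc hb
  have hcb' := D.lie_K_G1_mem hc hb'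
  rw [lie_add, lie_add, D.gform_add_add hca hcb ha' hb', D.gform_add_add ha hb hca' hcb',
    D.gform_K _ hca a' ha', D.gform_K a ha _ hca', D.gform_G1 _ hcb b' hb', D.gform_G1 b hb _ hcb',
    LieModule.traceForm_lieInvariant ℝ L L c a, LieModule.traceForm_lieInvariant ℝ L L c b]
  ring

lemma eq_of_forall_gform_eq {p : Submodule ℝ L} (hp : p ≤ D.K ⊔ D.G1) (hv : v ∈ p) (hw : w ∈ p)
    (h : ∀ u ∈ p, D.gform v u = D.gform w u) : v = w := by
  by_contra hne
  have hsub : v - w ∈ p := p.sub_mem hv hw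
  have hpos := D.gform_posdef (v - w) (hp hsub) (sub_ne_zero.2 hne)
  rw [map_sub D.gform, LinearMap.sub_apply, h _ hsub, sub_self] at hpos
  exact hpos.false

lemma mem_G1_of_forall_gform_eq_zero (hv : v ∈ D.K ⊔ D.G1) (h : ∀ c ∈ D.K, D.gform v c = 0) :
    v ∈ D.G1 := by
  obtain ⟨a, ha, b, hb, rfl⟩ := Submodule.mem_sup.1 hv
  have ha0 : a = 0 := D.eq_of_forall_gform_eq le_sup_left ha D.K.zero_mem fun c hc => by
    simpa [D.gform_G1K c hc b hb] using h c hc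
  simpa [ha0] using hb

lemma Ubil_mem_G1 (hv : v ∈ D.K ⊔ D.G1) (hw : w ∈ D.K ⊔ D.G1) : D.Ubil v w ∈ D.G1 := by
  refine D.mem_G1_of_forall_gform_eq_zero (D.Ubil_mem v hv w hw) fun c hc => ?_
  have hU := D.Ubil_def v hv w hw c (Submodule.mem_sup_left hc)
  rw [D.projm_m _ (D.lie_K_sup_mem hc hv), D.projm_m _ (D.lie_K_sup_mem hc hw),
    D.gform_lie_left hc hv hw] at hU
  linarith

lemma Ubil_eq_zero (hv : v ∈ D.K ⊔ D.G1) (hw : w ∈ D.K ⊔ D.G1)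
    (h : ∀ d ∈ D.G1, D.gform (D.projm ⁅d, v⁆) w + D.gform v (D.projm ⁅d, w⁆) = 0) :
    D.Ubil v w = 0 := by
  refine D.eq_of_forall_gform_eq le_sup_right (D.Ubil_mem_G1 hv hw) D.G1.zero_mem fun d hd => ?_
  have hU := D.Ubil_def v hv w hw d (Submodule.mem_sup_right hd)
  rw [map_zero, LinearMap.zero_apply]
  linarith [h d hd]

lemma Ubil_K_K (hx : x ∈ D.K) (hx' : x' ∈ D.K) : D.Ubil x x' = 0 := by
  refine D.Ubil_eq_zero (Submodule.mem_sup_left hx) (Submodule.mem_sup_left hx') fun d hd => ?_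
  have hdx := D.lie_G1_K_mem hd hx
  have hdx' := D.lie_G1_K_mem hd hx'
  rw [D.projm_of_mem_G1 hdx, D.projm_of_mem_G1 hdx', D.gform_G1K x' hx' _ hdx,
    D.gform_KG1 x hx _ hdx', add_zero]

lemma Ubil_G1_G1 (hy : y ∈ D.G1) (hy' : y' ∈ D.G1) : D.Ubil y y' = 0 := by
  refine D.Ubil_eq_zero (Submodule.mem_sup_right hy) (Submodule.mem_sup_right hy') fun d hd => ?_
  have hdy := D.projm_mem_K (D.hG1G1 d hd y hy)
  have hdy' := D.projm_mem_K (D.hG1G1 d hd y' hy')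
  rw [D.gform_KG1 _ hdy y' hy', D.gform_G1K _ hdy' y hy, add_zero]

lemma gform_lie_G1_K (hx : x ∈ D.K) (hy : y ∈ D.G1) (hd : d ∈ D.G1) :
    D.gform ⁅d, x⁆ y = D.gform ⁅x, y⁆ d := by
  have hxy := D.lie_K_G1_mem hx hy
  rw [← lie_skew, map_neg, LinearMap.neg_apply,
    D.gform_lie_left hx (Submodule.mem_sup_right hd) (Submodule.mem_sup_right hy), neg_neg,
    D.gform_comm (Submodule.mem_sup_right hd) (Submodule.mem_sup_right hxy)]

lemma two_mul_gform_Ubil_K_G1 (hx : x ∈ D.K) (hy : y ∈ D.G1) (hd : d ∈ D.G1) :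
    2 * D.gform (D.Ubil x y) d = D.gform ⁅x, y⁆ d + D.gform x (D.projm ⁅d, y⁆) := by
  rw [D.Ubil_def x (Submodule.mem_sup_left hx) y (Submodule.mem_sup_right hy) d
    (Submodule.mem_sup_right hd), D.projm_of_mem_G1 (D.lie_G1_K_mem hd hx),
    D.gform_lie_G1_K hx hy hd]

/-- The element `u ∈ 𝔤₁` for which the symmetric map `U'` of the dual data satisfies
`U'(x + iy, x' + iy') = iu`. The components of the arguments are passed separately, as for
`nomizuDual`. -/
def dualU (x y x' y' : L) : L :=
  ⁅x, y'⁆ + ⁅x', y⁆ - D.Ubil x y' - D.Ubil x' y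

lemma dualU_mem_G1 (hx : x ∈ D.K) (hy : y ∈ D.G1) (hx' : x' ∈ D.K) (hy' : y' ∈ D.G1) :
    D.dualU x y x' y' ∈ D.G1 :=
  have hU : D.Ubil x y' ∈ D.G1 :=
    D.Ubil_mem_G1 (Submodule.mem_sup_left hx) (Submodule.mem_sup_right hy')
  have hU' : D.Ubil x' y ∈ D.G1 :=
    D.Ubil_mem_G1 (Submodule.mem_sup_left hx') (Submodule.mem_sup_right hy)
  D.G1.sub_mem (D.G1.sub_mem
    (D.G1.add_mem (D.lie_K_G1_mem hx hy') (D.lie_K_G1_mem hx' hy)) hU) hU'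

lemma two_mul_gform_dualU (hx : x ∈ D.K) (hy : y ∈ D.G1) (hx' : x' ∈ D.K) (hy' : y' ∈ D.G1)
    (hc : c ∈ D.K) (hd : d ∈ D.G1) :
    2 * D.gform (D.dualU x y x' y') d =
      D.gform (⁅c, x⁆ - D.projm ⁅d, y⁆) x' + D.gform (⁅c, y⁆ + ⁅d, x⁆) y' +
        (D.gform x (⁅c, x'⁆ - D.projm ⁅d, y'⁆) + D.gform y (⁅c, y'⁆ + ⁅d, x'⁆)) := by
  have hK : D.gform ⁅c, x⁆ x' = -D.gform x ⁅c, x'⁆ :=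
    D.gform_lie_left hc (Submodule.mem_sup_left hx) (Submodule.mem_sup_left hx')
  have hG1 : D.gform ⁅c, y⁆ y' = -D.gform y ⁅c, y'⁆ :=
    D.gform_lie_left hc (Submodule.mem_sup_right hy) (Submodule.mem_sup_right hy')
  have hproj : D.gform (D.projm ⁅d, y⁆) x' = D.gform x' (D.projm ⁅d, y⁆) :=
    D.gform_comm (Submodule.mem_sup_left (D.projm_mem_K (D.hG1G1 d hd y hy)))
      (Submodule.mem_sup_left hx')
  have hlie : D.gform y ⁅d, x'⁆ = D.gform ⁅x', y⁆ d := by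
    rw [D.gform_comm (Submodule.mem_sup_right hy)
      (Submodule.mem_sup_right (D.lie_G1_K_mem hd hx')), D.gform_lie_G1_K hx' hy hd]
  have hU := D.two_mul_gform_Ubil_K_G1 hx hy' hd
  have hU' := D.two_mul_gform_Ubil_K_G1 hx' hy hd
  simp only [dualU, map_add, map_sub, LinearMap.add_apply, LinearMap.sub_apply]
  linarith [D.gform_lie_G1_K hx hy' hd]

lemma nomizuDual_eq (hx : x ∈ D.K) (hy : y ∈ D.G1) (hx' : x' ∈ D.K) (hy' : y' ∈ D.G1) :
    nomizuDual D x y x' y' =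
      (2⁻¹ : ℝ) • (iota1 (⁅x, x'⁆ - D.projm ⁅y, y'⁆) + iotaI (⁅x, y'⁆ + ⁅y, x'⁆)) +
        iotaI (D.dualU x y x' y') := by
  rw [nomizuDual, nomizu, nomizu, nomizu, nomizu, dualU, D.Ubil_K_K hx hx', D.Ubil_G1_G1 hy hy',
    D.Ubil_symm y x', D.projm_of_mem_K (D.hK_sub x hx x' hx'),
    D.projm_of_mem_G1 (D.lie_K_G1_mem hx hy'), D.projm_of_mem_G1 (D.lie_G1_K_mem hy hx'),
    ← lie_skew y x']
  simp only [map_add, map_sub, map_smul, map_neg, map_zero]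
  module

lemma iota1_add_iotaI_mem_mDual (hx : x ∈ D.K) (hy : y ∈ D.G1) : iota1 x + iotaI y ∈ mDual D :=
  Submodule.add_mem_sup (Submodule.mem_map_of_mem hx) (Submodule.mem_map_of_mem hy)

lemma exists_of_mem_mDual {A : ℂ ⊗[ℝ] L} (hA : A ∈ mDual D) :
    ∃ x ∈ D.K, ∃ y ∈ D.G1, A = iota1 x + iotaI y := by
  obtain ⟨_, ⟨x, hx, rfl⟩, _, ⟨y, hy, rfl⟩, rfl⟩ := Submodule.mem_sup.1 hA
  exact ⟨x, hx, y, hy, rfl⟩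

lemma eq_of_mem_mDual_of_forall {g' : ℂ ⊗[ℝ] L → ℂ ⊗[ℝ] L → ℝ}
    (hg' : ∀ x ∈ D.K, ∀ y ∈ D.G1, ∀ x' ∈ D.K, ∀ y' ∈ D.G1,
      g' (iota1 x + iotaI y) (iota1 x' + iotaI y') = D.gform x x' + D.gform y y')
    {A : ℂ ⊗[ℝ] L} (hA : A ∈ mDual D) (hx : x ∈ D.K) (hy : y ∈ D.G1)
    (h : ∀ c ∈ D.K, ∀ d ∈ D.G1, g' A (iota1 c + iotaI d) = D.gform x c + D.gform y d) :
    A = iota1 x + iotaI y := by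
  obtain ⟨a, ha, b, hb, rfl⟩ := D.exists_of_mem_mDual hA
  have hab : ∀ c ∈ D.K, ∀ d ∈ D.G1,
      D.gform a c + D.gform b d = D.gform x c + D.gform y d := fun c hc d hd => by
    rw [← hg' a ha b hb c hc d hd, h c hc d hd]
  have hax : a = x := D.eq_of_forall_gform_eq le_sup_left ha hx fun c hc => by
    simpa using hab c hc 0 D.G1.zero_mem
  have hby : b = y := D.eq_of_forall_gform_eq le_sup_right hb hy fun d hd => by
    simpa using hab 0 D.K.zero_mem d hd
  rw [hax, hby]

lemma proj_lie_iota1_add_iotaI {proj' : ℂ ⊗[ℝ] L →ₗ[ℝ] ℂ ⊗[ℝ] L}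
    (hproj'_H : ∀ h ∈ D.H, proj' (iota1 h) = 0)
    (hproj'_K : ∀ x ∈ D.K, proj' (iota1 x) = iota1 x)
    (hproj'_G1 : ∀ y ∈ D.G1, proj' (iotaI y) = iotaI y)
    (hx : x ∈ D.K) (hy : y ∈ D.G1) (hx' : x' ∈ D.K) (hy' : y' ∈ D.G1) :
    proj' ⁅iota1 x + iotaI y, iota1 x' + iotaI y'⁆ =
      iota1 (⁅x, x'⁆ - D.projm ⁅y, y'⁆) + iotaI (⁅x, y'⁆ + ⁅y, x'⁆) := by
  have hyy' : ⁅y, y'⁆ ∈ D.H ⊔ D.K := D.hG1G1 y hy y' hy'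
  have hproj_yy' : proj' (iota1 ⁅y, y'⁆) = iota1 (D.projm ⁅y, y'⁆) := by
    rw [← sub_eq_zero, ← hproj'_K _ (D.projm_mem_K hyy'), ← map_sub, ← map_sub]
    exact hproj'_H _ (D.sub_projm_mem_H hyy')
  rw [lie_iota1_add_iotaI, map_add proj', map_sub iota1, map_sub proj', hproj_yy',
    hproj'_K _ (D.hK_sub x hx x' hx'),
    hproj'_G1 _ (D.lie_add_lie_mem_G1 hx hy hx' hy'), ← map_sub]

end ExtSymData

theorem statement_11_general [FiniteDimensional ℝ L] (D : ExtSymData L)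
    (g' : (ℂ ⊗[ℝ] L) → (ℂ ⊗[ℝ] L) → ℝ)
    (hg' : ∀ x ∈ D.K, ∀ y ∈ D.G1, ∀ x' ∈ D.K, ∀ y' ∈ D.G1,
      g' (iota1 x + iotaI y) (iota1 x' + iotaI y')
        = D.gform x x' + D.gform y y')
    (proj' : (ℂ ⊗[ℝ] L) →ₗ[ℝ] ℂ ⊗[ℝ] L)
    (hproj'_H : ∀ h ∈ D.H, proj' (iota1 h) = 0)
    (hproj'_K : ∀ x ∈ D.K, proj' (iota1 x) = iota1 x)
    (hproj'_G1 : ∀ y ∈ D.G1, proj' (iotaI y) = iotaI y)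
    (U' : (ℂ ⊗[ℝ] L) → (ℂ ⊗[ℝ] L) → ℂ ⊗[ℝ] L)
    (hU'_mem : ∀ A ∈ mDual D, ∀ B ∈ mDual D, U' A B ∈ mDual D)
    (hU'_def : ∀ A ∈ mDual D, ∀ B ∈ mDual D, ∀ C ∈ mDual D,
      2 * g' (U' A B) C = g' (proj' ⁅C, A⁆) B + g' A (proj' ⁅C, B⁆))
    (x : L) (hx : x ∈ D.K) (y : L) (hy : y ∈ D.G1)
    (x' : L) (hx' : x' ∈ D.K) (y' : L) (hy' : y' ∈ D.G1) :
    nomizuDual D x y x' y'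
      = (2⁻¹ : ℝ) • proj' ⁅iota1 x + iotaI y, iota1 x' + iotaI y'⁆
        + U' (iota1 x + iotaI y) (iota1 x' + iotaI y') := by
  have hA : iota1 x + iotaI y ∈ mDual D := D.iota1_add_iotaI_mem_mDual hx hy
  have hB : iota1 x' + iotaI y' ∈ mDual D := D.iota1_add_iotaI_mem_mDual hx' hy'
  have hU' : U' (iota1 x + iotaI y) (iota1 x' + iotaI y') =
      iota1 0 + iotaI (D.dualU x y x' y') := by
    refine D.eq_of_mem_mDual_of_forall hg' (hU'_mem _ hA _ hB) D.K.zero_mem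
      (D.dualU_mem_G1 hx hy hx' hy') fun c hc d hd => ?_
    have hdef := hU'_def _ hA _ hB _ (D.iota1_add_iotaI_mem_mDual hc hd)
    rw [D.proj_lie_iota1_add_iotaI hproj'_H hproj'_K hproj'_G1 hc hd hx hy,
      D.proj_lie_iota1_add_iotaI hproj'_H hproj'_K hproj'_G1 hc hd hx' hy',
      hg' _ (D.lie_sub_projm_mem_K hc hd hx hy) _ (D.lie_add_lie_mem_G1 hc hd hx hy) x' hx' y' hy',
      hg' x hx y hy _ (D.lie_sub_projm_mem_K hc hd hx' hy') _ (D.lie_add_lie_mem_G1 hc hd hx' hy'),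
      ← D.two_mul_gform_dualU hx hy hx' hy' hc hd] at hdef
    rw [map_zero, LinearMap.zero_apply, zero_add]
    linarith
  rw [D.nomizuDual_eq hx hy hx' hy', hU',
    D.proj_lie_iota1_add_iotaI hproj'_H hproj'_K hproj'_G1 hx hy hx' hy', map_zero, zero_add]

/-- `Λ'` coincides with the Nomizu map of the dual data: for
all `A, B ∈ 𝔪'`, `Λ'(A)B = ½ proj_{𝔪'}([A,B]) + U'(A,B)`, where `U'` is the
symmetric map `𝔪' × 𝔪' → 𝔪'` determined by
`2g'(U'(A,B),C) = g'(proj_{𝔪'}([C,A]),B) + g'(A, proj_{𝔪'}([C,B]))` for all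
`C ∈ 𝔪'`. -/
theorem statement_11 [FiniteDimensional ℝ L] [LieAlgebra.IsSemisimple ℝ L]
    (D : ExtSymData L)
    (g' : (ℂ ⊗[ℝ] L) → (ℂ ⊗[ℝ] L) → ℝ)
    (hg' : ∀ x ∈ D.K, ∀ y ∈ D.G1, ∀ x' ∈ D.K, ∀ y' ∈ D.G1,
      g' (iota1 x + iotaI y) (iota1 x' + iotaI y')
        = D.gform x x' + D.gform y y')
    (proj' : (ℂ ⊗[ℝ] L) →ₗ[ℝ] ℂ ⊗[ℝ] L)
    (hproj'_H : ∀ h ∈ D.H, proj' (iota1 h) = 0)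
    (hproj'_K : ∀ x ∈ D.K, proj' (iota1 x) = iota1 x)
    (hproj'_G1 : ∀ y ∈ D.G1, proj' (iotaI y) = iotaI y)
    (U' : (ℂ ⊗[ℝ] L) → (ℂ ⊗[ℝ] L) → ℂ ⊗[ℝ] L)
    (hU'_mem : ∀ A ∈ mDual D, ∀ B ∈ mDual D, U' A B ∈ mDual D)
    (hU'_symm : ∀ A ∈ mDual D, ∀ B ∈ mDual D, U' A B = U' B A)
    (hU'_def : ∀ A ∈ mDual D, ∀ B ∈ mDual D, ∀ C ∈ mDual D,
      2 * g' (U' A B) C = g' (proj' ⁅C, A⁆) B + g' A (proj' ⁅C, B⁆))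
    (x : L) (hx : x ∈ D.K) (y : L) (hy : y ∈ D.G1)
    (x' : L) (hx' : x' ∈ D.K) (y' : L) (hy' : y' ∈ D.G1) :
    nomizuDual D x y x' y'
      = (2⁻¹ : ℝ) • proj' ⁅iota1 x + iotaI y, iota1 x' + iotaI y'⁆
        + U' (iota1 x + iotaI y) (iota1 x' + iotaI y') :=
  statement_11_general D g' hg' proj' hproj'_H hproj'_K hproj'_G1 U' hU'_mem hU'_def
    x hx y hy x' hx' y' hy'
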